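/- Inversion of the q-Hankel transforms: fix an integer m ≥ 1 and set μ = 1 + q^{2−m}. Let ν ≥ −1/2, let α, γ > 0, let p be a real polynomial, and define f(s) = p(s²)·e_{q²}(−αq²s²/μ) for s > 0. Let g(r) = 𝓗^{q,γ}_ν[f](r) for r > 0 (the bilateral series defining this infinite Jackson integral converges absolutely). Then for every real t with 0 < t < √(μ/(α(1−q²))), 𝓗̄^{q,1/α}_ν[g](t) = d · f(t), where d = ( q^{ν(ν+1)} / Γ_{q²}(ν+1) ) · ∫_0^{(αγ²/μ)·∞} d_{q²}u · u^ν e_{q²}(−u). -/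

import Mathlib

open scoped BigOperators

noncomputable section

/-- The q-number `[u]_q = (q^u - 1)/(q - 1)`. -/
def qNum (q u : ℝ) : ℝ := (q ^ u - 1) / (q - 1)

/-- The q-factorial `[n]_q! = ∏_{i=1}^n [i]_q`. -/
def qFact (q : ℝ) (n : ℕ) : ℝ := ∏ i ∈ Finset.range n, qNum q ((i : ℝ) + 1)

/-- The q-Gamma function `Γ_q(t) = (1-q)^{1-t} ∏_{k=0}^∞ (1-q^{k+1})/(1-q^{k+t})`. -/
def qGamma (q t : ℝ) : ℝ :=
  (1 - q) ^ (1 - t) * ∏' k : ℕ, (1 - q ^ (k + 1)) / (1 - q ^ ((k : ℝ) + t))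

/-- The q-derivative `∂^q_t f(t) = (f(qt) - f(t))/((q-1)t)`.
The `q⁻¹`-derivative is `qDeriv q⁻¹`. -/
def qDeriv (q : ℝ) (f : ℝ → ℝ) (t : ℝ) : ℝ := (f (q * t) - f t) / ((q - 1) * t)

/-- The q-Pochhammer symbol `(a; q)_k = ∏_{l=0}^{k-1} (1 - a q^l)`. -/
def qPoch (a q : ℝ) (k : ℕ) : ℝ := ∏ l ∈ Finset.range k, (1 - a * q ^ l)

/-- The q-exponential `E_q(t) = ∑_{j=0}^∞ q^{j(j-1)/2} t^j/[j]_q!`. -/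
def qExpE (q t : ℝ) : ℝ := ∑' j : ℕ, q ^ (j * (j - 1) / 2) * t ^ j / qFact q j

/-- `e_q(-u) := 1/E_q(u)` (intended for `u ≥ 0`); `qExpe q u` denotes `e_q(-u)`. -/
def qExpe (q u : ℝ) : ℝ := (qExpE q u)⁻¹

/-- The first q-Bessel function `J^{(1)}_ν(x|q²)`. -/
def qBessel1 (q ν x : ℝ) : ℝ :=
  (x / (1 + q)) ^ ν *
    ∑' i : ℕ, (-1 : ℝ) ^ i / (qFact (q ^ 2) i * qGamma (q ^ 2) ((i : ℝ) + ν + 1)) *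
      (x / (1 + q)) ^ (2 * i)

/-- The second q-Bessel function `J^{(2)}_ν(x|q²)`. -/
def qBessel2 (q ν x : ℝ) : ℝ :=
  q ^ (ν ^ 2) * (x / (1 + q)) ^ ν *
    ∑' i : ℕ, q ^ (2 * (i : ℝ) * ((i : ℝ) + ν)) * (-1 : ℝ) ^ i /
        (qFact (q ^ 2) i * qGamma (q ^ 2) ((i : ℝ) + ν + 1)) *
      (x / (1 + q)) ^ (2 * i)

/-- The q-Laguerre polynomial `𝓛^{(α)}_j(u|q²)`. -/
def qLaguerre (q α : ℝ) (j : ℕ) (u : ℝ) : ℝ :=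
  ∑ i ∈ Finset.range (j + 1),
    q ^ ((j - i) * (j - i + 1)) * (-u) ^ i / (qFact (q ^ 2) (j - i) * qFact (q ^ 2) i) *
      (qPoch (q ^ (2 * (i : ℝ) + 2 * α + 2)) (q ^ 2) (j - i) / (1 - q ^ 2) ^ (j - i))

/-- The q-Laguerre polynomial `𝓛^{(α)}_j(u|q^{-2})`. -/
def qLaguerreInv (q α : ℝ) (j : ℕ) (u : ℝ) : ℝ :=
  q ^ (-(j : ℝ) * ((j : ℝ) + 1 + 2 * α)) *
    ∑ i ∈ Finset.range (j + 1),
      q ^ (2 * (i : ℝ) * ((i : ℝ) + α)) * (-u) ^ i / (qFact (q ^ 2) (j - i) * qFact (q ^ 2) i) *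
        (qPoch (q ^ (2 * (i : ℝ) + 2 * α + 2)) (q ^ 2) (j - i) / (1 - q ^ 2) ^ (j - i))

/-- The finite Jackson q-integral `∫_0^a f(t) d_q t = (1-q) a ∑_{k=0}^∞ f(q^k a) q^k`. -/
def jackson (q a : ℝ) (f : ℝ → ℝ) : ℝ := (1 - q) * a * ∑' k : ℕ, f (q ^ k * a) * q ^ k

/-- The infinite Jackson q-integral `∫_0^{γ·∞} f(t) d_q t = (1-q) γ ∑_{k=-∞}^∞ f(q^k γ) q^k`. -/
def jacksonInf (q γ : ℝ) (f : ℝ → ℝ) : ℝ := (1 - q) * γ * ∑' k : ℤ, f (q ^ k * γ) * q ^ k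

/-- The first q-Hankel transform `𝓗̄^{q,β}_ν`. -/
def hankel1 (q μ ν β : ℝ) (f : ℝ → ℝ) (t : ℝ) : ℝ :=
  (1 + q) / μ * jackson q (Real.sqrt (μ / ((1 - q ^ 2) * β)))
    (fun r => qBessel1 q ν ((1 + q) / μ * (r * t)) / (r * t) ^ ν * r ^ (2 * ν + 1) * f r)

/-- The second q-Hankel transform `𝓗^{q,γ}_ν`. -/
def hankel2 (q μ ν γ : ℝ) (f : ℝ → ℝ) (r : ℝ) : ℝ :=
  (1 + q) / μ * jacksonInf q γ
    (fun t => qBessel2 q ν (q * ((1 + q) / μ) * (r * t)) / (r * t) ^ ν * t ^ (2 * ν + 1) * f t)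

section Helpers

open Filter Topology

lemma qFact_zero' (Q : ℝ) : qFact Q 0 = 1 := by simp [qFact]

lemma qFact_succ' (Q : ℝ) (hQ1 : Q < 1) (n : ℕ) :
    qFact Q (n + 1) = qFact Q n * ((1 - Q ^ (n + 1)) / (1 - Q)) := by
  unfold qFact qNum
  rw [Finset.prod_range_succ]
  congr 1
  have : Q ^ ((n : ℝ) + 1) = Q ^ (n + 1) := by
    rw [← Real.rpow_natCast]; push_cast; rfl
  rw [this, ← neg_div_neg_eq]; congr 1 <;> ring

lemma one_sub_pow_pos' {Q : ℝ} (hQ0 : 0 < Q) (hQ1 : Q < 1) (n : ℕ) : 0 < 1 - Q ^ (n + 1) := by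
  have := pow_lt_one₀ hQ0.le hQ1 (Nat.succ_ne_zero n)
  simpa using this

lemma qFact_pos' {Q : ℝ} (hQ0 : 0 < Q) (hQ1 : Q < 1) (n : ℕ) : 0 < qFact Q n := by
  induction n with
  | zero => simp [qFact_zero']
  | succ n ih =>
    rw [qFact_succ' Q hQ1]
    exact mul_pos ih (div_pos (one_sub_pow_pos' hQ0 hQ1 n) (by linarith))

lemma tendsto_one_sub {Q : ℝ} (hQ0 : 0 < Q) (hQ1 : Q < 1) :
    Tendsto (fun n : ℕ => 1 - Q ^ (n + 1)) atTop (𝓝 1) := by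
  have h := (tendsto_pow_atTop_nhds_zero_of_lt_one hQ0.le hQ1).comp (tendsto_add_atTop_nat 1)
  simpa using h.const_sub 1

/-- series of `e_Q` -/
lemma summable_e {Q : ℝ} (hQ0 : 0 < Q) (hQ1 : Q < 1) (z : ℝ) (hz : |z| < 1 / (1 - Q)) :
    Summable (fun j : ℕ => z ^ j / qFact Q j) := by
  have h1Q : 0 < 1 - Q := by linarith
  have hz' : |z| * (1 - Q) < 1 := by rwa [lt_div_iff₀ h1Q] at hz
  obtain ⟨r, hr1, hr2⟩ := exists_between hz'
  have ht : Tendsto (fun n : ℕ => |z| * (1 - Q) / (1 - Q ^ (n + 1))) atTop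
      (𝓝 (|z| * (1 - Q) / 1)) :=
    (tendsto_const_nhds).div (tendsto_one_sub hQ0 hQ1) one_ne_zero
  rw [div_one] at ht
  refine summable_of_ratio_norm_eventually_le hr2 ?_
  filter_upwards [ht.eventually_le_const hr1] with n hn
  have hp := qFact_pos' hQ0 hQ1 n
  have hp1 := qFact_pos' hQ0 hQ1 (n + 1)
  have h2 := one_sub_pow_pos' hQ0 hQ1 n
  rw [norm_div, norm_div, norm_pow, norm_pow, Real.norm_of_nonneg hp.le, Real.norm_of_nonneg hp1.le,
    Real.norm_eq_abs, qFact_succ' Q hQ1]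
  calc |z| ^ (n + 1) / (qFact Q n * ((1 - Q ^ (n + 1)) / (1 - Q)))
      = (|z| * (1 - Q) / (1 - Q ^ (n + 1))) * (|z| ^ n / qFact Q n) := by
        field_simp
        ring
    _ ≤ _ := by gcongr

lemma summable_E {Q : ℝ} (hQ0 : 0 < Q) (hQ1 : Q < 1) (z : ℝ) :
    Summable (fun j : ℕ => Q ^ (j * (j - 1) / 2) * z ^ j / qFact Q j) := by
  have h1Q : 0 < 1 - Q := by linarith
  have ht : Tendsto (fun n : ℕ => Q ^ n * (|z| * (1 - Q) / (1 - Q ^ (n + 1)))) atTop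
      (𝓝 (0 * (|z| * (1 - Q) / 1))) :=
    (tendsto_pow_atTop_nhds_zero_of_lt_one hQ0.le hQ1).mul
      ((tendsto_const_nhds).div (tendsto_one_sub hQ0 hQ1) one_ne_zero)
  rw [zero_mul] at ht
  refine summable_of_ratio_norm_eventually_le (r := 1 / 2) (by norm_num) ?_
  filter_upwards [ht.eventually_le_const (show (0 : ℝ) < 1 / 2 by norm_num)] with n hn
  have hp := qFact_pos' hQ0 hQ1 n
  have hp1 := qFact_pos' hQ0 hQ1 (n + 1)
  have h2 := one_sub_pow_pos' hQ0 hQ1 n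
  rw [norm_div, norm_div, norm_mul, norm_mul, norm_pow, norm_pow, norm_pow, norm_pow,
    Real.norm_of_nonneg hp.le, Real.norm_of_nonneg hp1.le, Real.norm_of_nonneg hQ0.le,
    Real.norm_eq_abs, qFact_succ' Q hQ1, Nat.triangle_succ]
  calc Q ^ (n * (n - 1) / 2 + n) * |z| ^ (n + 1) / (qFact Q n * ((1 - Q ^ (n + 1)) / (1 - Q)))
      = (Q ^ n * (|z| * (1 - Q) / (1 - Q ^ (n + 1)))) *
          (Q ^ (n * (n - 1) / 2) * |z| ^ n / qFact Q n) := by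
        field_simp
        ring
    _ ≤ _ := by gcongr

/-- functional equation for E -/
lemma qExpE_feq {Q : ℝ} (hQ0 : 0 < Q) (hQ1 : Q < 1) (z : ℝ) :
    qExpE Q z = (1 + (1 - Q) * z) * qExpE Q (Q * z) := by
  have h1Q : 0 < 1 - Q := by linarith
  have hs := summable_E hQ0 hQ1 z
  have hs2 := summable_E hQ0 hQ1 (Q * z)
  have key : qExpE Q z - qExpE Q (Q * z) = (1 - Q) * z * qExpE Q (Q * z) := by
    unfold qExpE
    rw [← hs.tsum_sub hs2, (hs.sub hs2).tsum_eq_zero_add, ← tsum_mul_left]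
    simp only [Nat.zero_mul, Nat.zero_div, pow_zero, sub_self, zero_add]
    refine tsum_congr fun j => ?_
    have hp := qFact_pos' hQ0 hQ1 j
    have h2 := one_sub_pow_pos' hQ0 hQ1 j
    rw [qFact_succ' Q hQ1, Nat.triangle_succ, mul_pow, mul_pow]
    field_simp
    ring
  linarith

lemma e_feq {Q : ℝ} (hQ0 : 0 < Q) (hQ1 : Q < 1) (z : ℝ) (hz : |z| < 1 / (1 - Q)) :
    ∑' j : ℕ, (Q * z) ^ j / qFact Q j = (1 - (1 - Q) * z) * ∑' j : ℕ, z ^ j / qFact Q j := by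
  have h1Q : 0 < 1 - Q := by linarith
  have hs := summable_e hQ0 hQ1 z hz
  have hz2 : |Q * z| < 1 / (1 - Q) := by
    rw [abs_mul, abs_of_pos hQ0]
    nlinarith [abs_nonneg z]
  have hs2 := summable_e hQ0 hQ1 (Q * z) hz2
  have key : ∑' j : ℕ, z ^ j / qFact Q j - ∑' j : ℕ, (Q * z) ^ j / qFact Q j
      = (1 - Q) * z * ∑' j : ℕ, z ^ j / qFact Q j := by
    rw [← hs.tsum_sub hs2, (hs.sub hs2).tsum_eq_zero_add, ← tsum_mul_left]
    simp only [pow_zero, sub_self, zero_add]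
    refine tsum_congr fun j => ?_
    have hp := qFact_pos' hQ0 hQ1 j
    have h2 := one_sub_pow_pos' hQ0 hQ1 j
    rw [qFact_succ' Q hQ1, mul_pow]
    field_simp
    ring
  linarith

/-- power series tend to their constant term along geometric sequences -/
lemma tendsto_series {Q : ℝ} (hQ0 : 0 < Q) (hQ1 : Q < 1) (a : ℕ → ℝ) (z : ℝ)
    (hs : Summable (fun j => a j * z ^ j)) :
    Tendsto (fun N : ℕ => ∑' j, a j * (Q ^ N * z) ^ j) atTop (𝓝 (a 0)) := by
  have h := tendsto_tsum_of_dominated_convergence (𝓕 := atTop)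
    (f := fun (N : ℕ) (j : ℕ) => a j * (Q ^ N * z) ^ j)
    (g := fun j => if j = 0 then a 0 else 0) (bound := fun j => ‖a j * z ^ j‖) hs.norm ?_ ?_
  · simpa using h
  · intro j
    rcases Nat.eq_zero_or_pos j with rfl | hj
    · simp
    · rw [if_neg hj.ne']
      have h1 : Tendsto (fun N : ℕ => Q ^ N * z) atTop (𝓝 (0 * z)) :=
        (tendsto_pow_atTop_nhds_zero_of_lt_one hQ0.le hQ1).mul_const z
      have h2 := (h1.pow j).const_mul (a j)
      simpa [hj.ne'] using h2
  · refine Eventually.of_forall fun N j => ?_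
    rw [norm_mul, norm_mul, mul_pow, norm_mul]
    have h1 : ‖(Q ^ N) ^ j‖ ≤ 1 := by
      rw [norm_pow, norm_pow, Real.norm_of_nonneg hQ0.le]
      exact pow_le_one₀ (by positivity) (pow_le_one₀ hQ0.le hQ1.le)
    have h2 : ‖(Q ^ N) ^ j‖ * ‖z ^ j‖ ≤ 1 * ‖z ^ j‖ := by gcongr
    rw [one_mul] at h2
    gcongr

lemma tendsto_E {Q : ℝ} (hQ0 : 0 < Q) (hQ1 : Q < 1) (z : ℝ) :
    Tendsto (fun N : ℕ => qExpE Q (Q ^ N * z)) atTop (𝓝 1) := by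
  have h := tendsto_series hQ0 hQ1 (fun j => Q ^ (j * (j - 1) / 2) / qFact Q j) z
    ((summable_E hQ0 hQ1 z).congr fun j => by ring)
  simp only [Nat.zero_mul, Nat.zero_div, pow_zero, qFact_zero', div_one] at h
  refine h.congr fun N => ?_
  unfold qExpE
  exact tsum_congr fun j => by ring

lemma tendsto_e {Q : ℝ} (hQ0 : 0 < Q) (hQ1 : Q < 1) (z : ℝ) (hz : |z| < 1 / (1 - Q)) :
    Tendsto (fun N : ℕ => ∑' j : ℕ, (Q ^ N * z) ^ j / qFact Q j) atTop (𝓝 1) := by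
  have h := tendsto_series hQ0 hQ1 (fun j => 1 / qFact Q j) z
    ((summable_e hQ0 hQ1 z hz).congr fun j => by ring)
  simp only [qFact_zero', div_one] at h
  refine h.congr fun N => ?_
  exact tsum_congr fun j => by ring

lemma qExpE_ge_term {Q : ℝ} (hQ0 : 0 < Q) (hQ1 : Q < 1) (z : ℝ) (hz : 0 ≤ z) (j : ℕ) :
    Q ^ (j * (j - 1) / 2) * z ^ j / qFact Q j ≤ qExpE Q z := by
  refine (summable_E hQ0 hQ1 z).le_tsum j fun i _ => ?_
  have := qFact_pos' hQ0 hQ1 i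
  positivity

lemma qExpE_ge_one {Q : ℝ} (hQ0 : 0 < Q) (hQ1 : Q < 1) (z : ℝ) (hz : 0 ≤ z) :
    1 ≤ qExpE Q z := by
  simpa [qFact_zero'] using qExpE_ge_term hQ0 hQ1 z hz 0

lemma e_eq_inv {Q : ℝ} (hQ0 : 0 < Q) (hQ1 : Q < 1) (z : ℝ) (hz0 : 0 ≤ z) (hz : z < 1 / (1 - Q)) :
    ∑' j : ℕ, (-z) ^ j / qFact Q j = qExpe Q z := by
  have habs : ∀ N : ℕ, |Q ^ N * (-z)| < 1 / (1 - Q) := by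
    intro N
    rw [abs_mul, abs_neg, abs_of_nonneg hz0, abs_of_pos (by positivity)]
    have : Q ^ N ≤ 1 := pow_le_one₀ hQ0.le hQ1.le
    nlinarith
  have hP : ∀ N : ℕ, (∑' j : ℕ, (Q ^ N * (-z)) ^ j / qFact Q j) * qExpE Q (Q ^ N * z)
      = (∑' j : ℕ, (-z) ^ j / qFact Q j) * qExpE Q z := by
    intro N
    induction N with
    | zero => simp
    | succ N ih =>
      rw [← ih, qExpE_feq hQ0 hQ1 (Q ^ N * z)]
      have := e_feq hQ0 hQ1 _ (habs N)
      have e1 : Q ^ (N + 1) * (-z) = Q * (Q ^ N * -z) := by ring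
      have e2 : Q ^ (N + 1) * z = Q * (Q ^ N * z) := by ring
      rw [e1, e2, this]
      ring
  have h0 := habs 0
  rw [pow_zero, one_mul] at h0
  have hl := (tendsto_e hQ0 hQ1 (-z) h0).mul (tendsto_E hQ0 hQ1 z)
  simp only [hP, one_mul] at hl
  have := tendsto_nhds_unique hl tendsto_const_nhds
  unfold qExpe
  have hE := qExpE_ge_one hQ0 hQ1 z hz0
  field_simp
  linarith

lemma qExpe_feq {Q : ℝ} (hQ0 : 0 < Q) (hQ1 : Q < 1) (z : ℝ) (hz : 0 ≤ z) :
    qExpe Q (Q * z) = (1 + (1 - Q) * z) * qExpe Q z := by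
  unfold qExpe
  rw [qExpE_feq hQ0 hQ1 z]
  have h1 := qExpE_ge_one hQ0 hQ1 (Q * z) (by positivity)
  have h2 : 0 < 1 + (1 - Q) * z := by nlinarith
  rw [mul_inv, ← mul_assoc, mul_inv_cancel₀ h2.ne', one_mul]

lemma qExpe_pos {Q : ℝ} (hQ0 : 0 < Q) (hQ1 : Q < 1) (z : ℝ) (hz : 0 ≤ z) : 0 < qExpe Q z :=
  inv_pos.2 (by linarith [qExpE_ge_one hQ0 hQ1 z hz])

lemma qExpe_le_one {Q : ℝ} (hQ0 : 0 < Q) (hQ1 : Q < 1) (z : ℝ) (hz : 0 ≤ z) : qExpe Q z ≤ 1 :=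
  inv_le_one_of_one_le₀ (qExpE_ge_one hQ0 hQ1 z hz)

/-- `h_k = E_Q(-Q^k/(1-Q)) = (Q^k;Q)_∞` -/
def hk (Q : ℝ) (k : ℕ) : ℝ := qExpE Q (Q ^ k * (-(1 / (1 - Q))))

lemma hk_rec {Q : ℝ} (hQ0 : 0 < Q) (hQ1 : Q < 1) (k : ℕ) :
    hk Q k = (1 - Q ^ k) * hk Q (k + 1) := by
  have h1Q : 0 < 1 - Q := by linarith
  unfold hk
  rw [qExpE_feq hQ0 hQ1, show Q * (Q ^ k * -(1 / (1 - Q))) = Q ^ (k + 1) * -(1 / (1 - Q)) by ring]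
  congr 1
  field_simp
  ring

lemma hk_zero {Q : ℝ} (hQ0 : 0 < Q) (hQ1 : Q < 1) : hk Q 0 = 0 := by
  rw [hk_rec hQ0 hQ1]; simp

lemma hk_tendsto {Q : ℝ} (hQ0 : 0 < Q) (hQ1 : Q < 1) : Tendsto (hk Q) atTop (𝓝 1) :=
  tendsto_E hQ0 hQ1 _

lemma hk_prod {Q : ℝ} (hQ0 : 0 < Q) (hQ1 : Q < 1) (N : ℕ) :
    hk Q 1 = (∏ k ∈ Finset.range N, (1 - Q ^ (k + 1))) * hk Q (N + 1) := by
  induction N with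
  | zero => simp
  | succ N ih => rw [ih, hk_rec hQ0 hQ1 (N + 1), Finset.prod_range_succ]; ring

lemma hk_pos {Q : ℝ} (hQ0 : 0 < Q) (hQ1 : Q < 1) (k : ℕ) : 0 < hk Q (k + 1) := by
  have step : ∀ n j : ℕ, 0 < hk Q (n + 1 + j) → 0 < hk Q (n + 1) := by
    intro n j
    induction j with
    | zero => simp
    | succ j ih =>
      intro h
      apply ih
      rw [hk_rec hQ0 hQ1]
      have := one_sub_pow_pos' hQ0 hQ1 (n + j)
      refine mul_pos ?_ h
      rwa [show n + 1 + j = n + j + 1 by ring]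
  have := ((hk_tendsto hQ0 hQ1).eventually_const_lt (show (0:ℝ) < 1 by norm_num))
  obtain ⟨N, hN⟩ := eventually_atTop.1 this
  exact step k N (hN _ (by omega))

lemma hk_nonneg {Q : ℝ} (hQ0 : 0 < Q) (hQ1 : Q < 1) (k : ℕ) : 0 ≤ hk Q k := by
  cases k with
  | zero => rw [hk_zero hQ0 hQ1]
  | succ k => exact (hk_pos hQ0 hQ1 k).le

lemma hk_le_one {Q : ℝ} (hQ0 : 0 < Q) (hQ1 : Q < 1) (k : ℕ) : hk Q k ≤ 1 := by
  have mono : Monotone (hk Q) := by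
    refine monotone_nat_of_le_succ fun n => ?_
    rw [hk_rec hQ0 hQ1 n]
    have h1 := hk_nonneg hQ0 hQ1 (n + 1)
    have : 0 < Q ^ n := by positivity
    nlinarith
  exact mono.ge_of_tendsto (hk_tendsto hQ0 hQ1) k

lemma rpow_lt_one' {Q : ℝ} (hQ0 : 0 < Q) (hQ1 : Q < 1) {a : ℝ} (ha : 0 < a) : Q ^ a < 1 :=
  Real.rpow_lt_one hQ0.le hQ1 ha

/-- `S(a) = ∑_k Q^{ka} h_k` -/
lemma summable_S {Q : ℝ} (hQ0 : 0 < Q) (hQ1 : Q < 1) {a : ℝ} (ha : 0 < a) :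
    Summable (fun k : ℕ => (Q ^ a) ^ k * hk Q k) := by
  refine Summable.of_nonneg_of_le (fun k => mul_nonneg (by positivity) (hk_nonneg hQ0 hQ1 k))
    (fun k => ?_) (summable_geometric_of_lt_one (by positivity) (rpow_lt_one' hQ0 hQ1 ha))
  exact mul_le_of_le_one_right (by positivity) (hk_le_one hQ0 hQ1 k)

/-- `T(a) = Q^{-a} S(a) = ∑_k Q^{ka} h_{k+1}` -/
def qT (Q a : ℝ) : ℝ := ∑' k : ℕ, (Q ^ a) ^ k * hk Q (k + 1)

lemma summable_T {Q : ℝ} (hQ0 : 0 < Q) (hQ1 : Q < 1) {a : ℝ} (ha : 0 < a) :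
    Summable (fun k : ℕ => (Q ^ a) ^ k * hk Q (k + 1)) := by
  refine Summable.of_nonneg_of_le (fun k => mul_nonneg (by positivity) (hk_nonneg hQ0 hQ1 _))
    (fun k => ?_) (summable_geometric_of_lt_one (by positivity) (rpow_lt_one' hQ0 hQ1 ha))
  exact mul_le_of_le_one_right (by positivity) (hk_le_one hQ0 hQ1 _)

lemma S_eq_T {Q : ℝ} (hQ0 : 0 < Q) (hQ1 : Q < 1) {a : ℝ} (ha : 0 < a) :
    ∑' k : ℕ, (Q ^ a) ^ k * hk Q k = Q ^ a * qT Q a := by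
  rw [(summable_S hQ0 hQ1 ha).tsum_eq_zero_add, hk_zero hQ0 hQ1, qT, ← tsum_mul_left]
  simp only [mul_zero, zero_add]
  exact tsum_congr fun k => by ring

lemma qT_rec {Q : ℝ} (hQ0 : 0 < Q) (hQ1 : Q < 1) {a : ℝ} (ha : 0 < a) :
    qT Q (a + 1) = (1 - Q ^ a) * qT Q a := by
  have h1 := S_eq_T hQ0 hQ1 ha
  have e1 : ∑' k : ℕ, (Q ^ a) ^ k * hk Q k = qT Q a - qT Q (a + 1) := by
    unfold qT
    rw [← (summable_T hQ0 hQ1 ha).tsum_sub (summable_T hQ0 hQ1 (by linarith : 0 < a + 1))]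
    refine tsum_congr fun k => ?_
    rw [hk_rec hQ0 hQ1 k, Real.rpow_add_one hQ0.ne', mul_pow]
    ring
  linarith

lemma qT_iter {Q : ℝ} (hQ0 : 0 < Q) (hQ1 : Q < 1) {a : ℝ} (ha : 0 < a) (N : ℕ) :
    qT Q (a + N) = (∏ k ∈ Finset.range N, (1 - Q ^ ((k : ℝ) + a))) * qT Q a := by
  induction N with
  | zero => simp
  | succ N ih =>
    rw [Finset.prod_range_succ, show a + ((N + 1 : ℕ) : ℝ) = a + N + 1 by push_cast; ring,
      qT_rec hQ0 hQ1 (by positivity), ih, add_comm a (N : ℝ)]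
    ring

lemma qT_pos {Q : ℝ} (hQ0 : 0 < Q) (hQ1 : Q < 1) {a : ℝ} (ha : 0 < a) : 0 < qT Q a :=
  (summable_T hQ0 hQ1 ha).tsum_pos (fun k => mul_nonneg (by positivity) (hk_nonneg hQ0 hQ1 _)) 0
    (by simpa using hk_pos hQ0 hQ1 0)

lemma qT_tendsto {Q : ℝ} (hQ0 : 0 < Q) (hQ1 : Q < 1) {a : ℝ} (ha : 0 < a) :
    Tendsto (fun N : ℕ => qT Q (a + N)) atTop (𝓝 (hk Q 1)) := by
  have h := tendsto_series hQ0 hQ1 (fun k => hk Q (k + 1)) (Q ^ a)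
    ((summable_T hQ0 hQ1 ha).congr fun k => by ring)
  simp only [zero_add] at h
  refine h.congr fun N => ?_
  unfold qT
  refine tsum_congr fun k => ?_
  rw [Real.rpow_add hQ0, Real.rpow_natCast]
  ring

lemma qGamma_eq {Q : ℝ} (hQ0 : 0 < Q) (hQ1 : Q < 1) {a : ℝ} (ha : 0 < a) :
    qGamma Q a = (1 - Q) ^ (1 - a) * qT Q a := by
  have hden : ∀ k : ℕ, 0 < 1 - Q ^ ((k : ℝ) + a) := fun k => by
    have := rpow_lt_one' hQ0 hQ1 (show 0 < (k : ℝ) + a by positivity)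
    linarith
  have hmul : Multipliable (fun k : ℕ => (1 - Q ^ (k + 1)) / (1 - Q ^ ((k : ℝ) + a))) := by
    have hs : Summable (fun k : ℕ => (Q ^ ((k : ℝ) + a) - Q ^ (k + 1)) / (1 - Q ^ ((k : ℝ) + a))) := by
      have hb : Summable (fun k : ℕ => (Q ^ a + Q) / (1 - Q ^ a) * Q ^ k) :=
        (summable_geometric_of_lt_one hQ0.le hQ1).mul_left _
      refine Summable.of_norm_bounded hb fun k => ?_
      rw [norm_div, Real.norm_of_nonneg (hden k).le]
      have h0 := hden 0
      simp only [Nat.cast_zero, zero_add] at h0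
      have h3 : Q ^ ((k : ℝ) + a) = Q ^ k * Q ^ a := by rw [Real.rpow_add hQ0, Real.rpow_natCast]
      have hQk : Q ^ k ≤ 1 := pow_le_one₀ hQ0.le hQ1.le
      have hQa : 0 < Q ^ a := by positivity
      have h1 : ‖Q ^ ((k : ℝ) + a) - Q ^ (k + 1)‖ ≤ (Q ^ a + Q) * Q ^ k := by
        refine (norm_sub_le _ _).trans ?_
        rw [Real.norm_of_nonneg (by positivity), Real.norm_of_nonneg (by positivity), h3]
        apply le_of_eq; ring
      have h2 : 1 - Q ^ a ≤ 1 - Q ^ ((k : ℝ) + a) := by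
        rw [h3]; nlinarith
      calc _ ≤ (Q ^ a + Q) * Q ^ k / (1 - Q ^ a) := by gcongr
        _ = _ := by ring
    refine (Real.multipliable_one_add_of_summable hs).congr fun k => ?_
    have := hden k
    field_simp
    ring
  have h1 := hmul.hasProd.tendsto_prod_nat
  have h2 : Tendsto (fun N : ℕ => ∏ k ∈ Finset.range N,
      (1 - Q ^ (k + 1)) / (1 - Q ^ ((k : ℝ) + a))) atTop (𝓝 (hk Q 1 / 1 * (qT Q a / hk Q 1))) := by
    have ha1 : Tendsto (fun N : ℕ => hk Q 1 / hk Q (N + 1)) atTop (𝓝 (hk Q 1 / 1)) :=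
      tendsto_const_nhds.div ((hk_tendsto hQ0 hQ1).comp (tendsto_add_atTop_nat 1)) one_ne_zero
    have ha2 : Tendsto (fun N : ℕ => qT Q a / qT Q (a + N)) atTop (𝓝 (qT Q a / hk Q 1)) :=
      tendsto_const_nhds.div (qT_tendsto hQ0 hQ1 ha) (hk_pos hQ0 hQ1 0).ne'
    refine (ha1.mul ha2).congr fun N => ?_
    rw [Finset.prod_div_distrib, hk_prod hQ0 hQ1 N, qT_iter hQ0 hQ1 ha N]
    have b1 := hk_pos hQ0 hQ1 N
    have b2 := qT_pos hQ0 hQ1 ha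
    have b3 : 0 < ∏ k ∈ Finset.range N, (1 - Q ^ ((k : ℝ) + a)) :=
      Finset.prod_pos fun k _ => hden k
    field_simp
  have h3 := tendsto_nhds_unique h1 h2
  unfold qGamma
  rw [h3]
  have := hk_pos hQ0 hQ1 0
  field_simp

lemma qGamma_pos {Q : ℝ} (hQ0 : 0 < Q) (hQ1 : Q < 1) {a : ℝ} (ha : 0 < a) : 0 < qGamma Q a := by
  rw [qGamma_eq hQ0 hQ1 ha]
  have : 0 < 1 - Q := by linarith
  have := qT_pos hQ0 hQ1 ha
  positivity

lemma qGamma_rec {Q : ℝ} (hQ0 : 0 < Q) (hQ1 : Q < 1) {a : ℝ} (ha : 0 < a) :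
    qGamma Q (a + 1) = (1 - Q ^ a) / (1 - Q) * qGamma Q a := by
  rw [qGamma_eq hQ0 hQ1 ha, qGamma_eq hQ0 hQ1 (by linarith), qT_rec hQ0 hQ1 ha]
  have h : 0 < 1 - Q := by linarith
  rw [show (1 : ℝ) - (a + 1) = 1 - a - 1 by ring, Real.rpow_sub_one h.ne']
  ring

/-- the sum `∑_k Q^{ka} h_k` -/
lemma hasSum_S {Q : ℝ} (hQ0 : 0 < Q) (hQ1 : Q < 1) {a : ℝ} (ha : 0 < a) :
    HasSum (fun k : ℕ => (Q ^ a) ^ k * hk Q k) (Q ^ a * (1 - Q) ^ (a - 1) * qGamma Q a) := by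
  have h := (summable_S hQ0 hQ1 ha).hasSum
  rw [S_eq_T hQ0 hQ1 ha] at h
  convert h using 1
  have h1 : 0 < 1 - Q := by linarith
  rw [qGamma_eq hQ0 hQ1 ha, mul_assoc, ← mul_assoc ((1 - Q) ^ (a - 1)), ← Real.rpow_add h1]
  simp

/-- exchange of summation -/
lemma exchange {κ : Type*} (a : ℕ → ℝ) (W : κ → ℕ → ℝ) (w : ℕ → ℝ) (hW : ∀ k i, 0 ≤ W k i)
    (hs : ∀ i, HasSum (fun k => W k i) (w i)) (ha : Summable (fun i => |a i| * w i)) :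
    HasSum (fun k => ∑' i, a i * W k i) (∑' i, a i * w i) := by
  have h1 : Summable (fun p : ℕ × κ => |a p.1| * W p.2 p.1) := by
    have h0 : (0 : ℕ × κ → ℝ) ≤ (fun p : ℕ × κ => |a p.1| * W p.2 p.1) :=
      fun p => mul_nonneg (abs_nonneg _) (hW _ _)
    have h01 : ∀ i, Summable (fun k => |a i| * W k i) := fun i =>
      Summable.mul_left (|a i|) (hs i).summable
    refine (summable_prod_of_nonneg h0).2 ⟨h01, ?_⟩
    have : (fun i => |a i| * w i) = fun i => ∑' k, |a i| * W k i := by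
      funext i
      rw [tsum_mul_left, (hs i).tsum_eq]
    rw [this] at ha
    exact ha
  have h2 : Summable (fun p : ℕ × κ => a p.1 * W p.2 p.1) := by
    refine Summable.of_norm (h1.congr fun p => ?_)
    rw [norm_mul, Real.norm_eq_abs, Real.norm_of_nonneg (hW _ _)]
  have h3 : Summable (fun k => ∑' i, a i * W k i) := h2.prod_symm.prod
  have h5 : ∑' (k : κ) (i : ℕ), a i * W k i = ∑' (i : ℕ) (k : κ), a i * W k i :=
    Summable.tsum_comm (f := fun (i : ℕ) (k : κ) => a i * W k i) h2
  have h6 : ∑' i, a i * w i = ∑' (i : ℕ) (k : κ), a i * W k i :=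
    tsum_congr fun i => by rw [tsum_mul_left, (hs i).tsum_eq]
  rw [h6, ← h5]
  exact h3.hasSum

/-- moments of the q-exponential -/
def qM (Q c a : ℝ) : ℝ := ∑' k : ℤ, (Q ^ k * c) ^ a * qExpe Q (Q ^ k * c)

lemma summable_M {Q : ℝ} (hQ0 : 0 < Q) (hQ1 : Q < 1) {c a : ℝ} (hc : 0 < c) (ha : 0 < a) :
    Summable (fun k : ℤ => (Q ^ k * c) ^ a * qExpe Q (Q ^ k * c)) := by
  apply Summable.of_nat_of_neg
  · have hb : Summable (fun n : ℕ => c ^ a * (Q ^ a) ^ n) :=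
      (summable_geometric_of_lt_one (by positivity) (rpow_lt_one' hQ0 hQ1 ha)).mul_left _
    refine Summable.of_nonneg_of_le (fun n => ?_) (fun n => ?_) hb
    · exact mul_nonneg (by positivity) (qExpe_pos hQ0 hQ1 _ (by positivity)).le
    · refine (mul_le_of_le_one_right (by positivity)
        (qExpe_le_one hQ0 hQ1 _ (by positivity))).trans (le_of_eq ?_)
      rw [zpow_natCast, Real.mul_rpow (by positivity) hc.le, ← Real.rpow_natCast,
        ← Real.rpow_natCast, ← Real.rpow_mul hQ0.le, ← Real.rpow_mul hQ0.le]
      rw [mul_comm a]; ring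
  · obtain ⟨j, hj⟩ := exists_nat_gt a
    set B : ℝ := Q ^ (j * (j - 1) / 2) / qFact Q j with hB
    have hBpos : 0 < B := div_pos (by positivity) (qFact_pos' hQ0 hQ1 j)
    have hb : Summable (fun n : ℕ => c ^ (a - j) / B * (Q ^ ((j : ℝ) - a)) ^ n) :=
      (summable_geometric_of_lt_one (by positivity)
        (rpow_lt_one' hQ0 hQ1 (by linarith))).mul_left _
    refine Summable.of_nonneg_of_le (fun n => ?_) (fun n => ?_) hb
    · exact mul_nonneg (by positivity) (qExpe_pos hQ0 hQ1 _ (by positivity)).le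
    · set u : ℝ := Q ^ (-(n : ℤ)) * c with hu
      have hupos : 0 < u := by positivity
      have h1 : B * u ^ j ≤ qExpE Q u := by
        have := qExpE_ge_term hQ0 hQ1 u hupos.le j
        rw [hB]; convert this using 1; ring
      have h2 : qExpe Q u ≤ (B * u ^ j)⁻¹ := inv_anti₀ (by positivity) h1
      have h3 : u ^ (a - j) = c ^ (a - j) * (Q ^ ((j : ℝ) - a)) ^ n := by
        rw [hu, Real.mul_rpow (by positivity) hc.le, ← Real.rpow_intCast, ← Real.rpow_natCast,
          ← Real.rpow_mul hQ0.le, ← Real.rpow_mul hQ0.le]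
        rw [mul_comm]
        congr 2
        push_cast; ring
      calc u ^ a * qExpe Q u ≤ u ^ a * (B * u ^ j)⁻¹ := by gcongr
        _ = u ^ (a - j) / B := by
          rw [Real.rpow_sub hupos, Real.rpow_natCast]
          field_simp
        _ = _ := by rw [h3]; ring

lemma hasSum_shift {Q : ℝ} (hQ0 : 0 < Q) (hQ1 : Q < 1) {c a : ℝ} (hc : 0 < c) (ha : 0 < a) :
    HasSum (fun k : ℤ => (Q ^ k * c) ^ a * qExpe Q (Q * (Q ^ k * c))) (Q ^ (-a) * qM Q c a) := by
  have h := (summable_M hQ0 hQ1 hc ha).hasSum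
  have h2 := ((Equiv.addRight (1 : ℤ)).hasSum_iff.2 h).mul_left (Q ^ (-a))
  refine h2.congr_fun ?_
  intro k
  simp only [Function.comp, Equiv.coe_addRight]
  have e : Q ^ (k + 1) * c = Q * (Q ^ k * c) := by rw [zpow_add_one₀ hQ0.ne']; ring
  rw [e, Real.mul_rpow hQ0.le (by positivity), Real.rpow_neg hQ0.le]
  have : 0 < Q ^ a := by positivity
  field_simp

lemma qM_rec {Q : ℝ} (hQ0 : 0 < Q) (hQ1 : Q < 1) {c a : ℝ} (hc : 0 < c) (ha : 0 < a) :
    qM Q c (a + 1) = (Q ^ (-a) - 1) / (1 - Q) * qM Q c a := by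
  have h := hasSum_shift hQ0 hQ1 hc ha
  have h1 := (summable_M hQ0 hQ1 hc ha).hasSum
  have h2 := ((summable_M hQ0 hQ1 hc (show 0 < a + 1 by linarith)).hasSum).mul_left (1 - Q)
  have h3 := h1.add h2
  have h4 : Q ^ (-a) * qM Q c a = qM Q c a + (1 - Q) * qM Q c (a + 1) := by
    refine h.unique (h3.congr_fun ?_)
    intro k
    have hu : 0 < Q ^ k * c := by positivity
    rw [qExpe_feq hQ0 hQ1 _ hu.le, Real.rpow_add_one hu.ne']
    ring
  have : 0 < 1 - Q := by linarith
  field_simp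
  linarith

lemma coef_id {q : ℝ} (hq0 : 0 < q) (hq1 : q < 1) {c ν : ℝ} (hc : 0 < c) (hν : -1 < ν) (i : ℕ) :
    q ^ (2 * (i : ℝ) * ((i : ℝ) + ν)) * (q ^ 2) ^ i / qGamma (q ^ 2) ((i : ℝ) + ν + 1) *
      ((q ^ 2) ^ (-(ν + 1 + i)) * qM (q ^ 2) c (ν + 1 + i)) =
    (q ^ 2) ^ (-(ν + 1)) * qM (q ^ 2) c (ν + 1) / qGamma (q ^ 2) (ν + 1) *
      (q ^ 2) ^ (i * (i - 1) / 2) := by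
  have hQ0 : 0 < q ^ 2 := by positivity
  have hQ1 : q ^ 2 < 1 := by nlinarith
  induction i with
  | zero => simp; ring
  | succ i ih =>
    rw [Nat.triangle_succ, pow_add _ (i * (i - 1) / 2) i,
      ← mul_assoc _ ((q ^ 2) ^ (i * (i - 1) / 2)) _, ← ih]
    have ha : 0 < ν + 1 + i := by have : (0:ℝ) ≤ i := by positivity
                                  linarith
    have e1 : ((i + 1 : ℕ) : ℝ) + ν + 1 = (ν + 1 + i) + 1 := by push_cast; ring
    have e2 : ν + 1 + ((i + 1 : ℕ) : ℝ) = (ν + 1 + i) + 1 := by push_cast; ring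
    have e3 : (i : ℝ) + ν + 1 = ν + 1 + i := by ring
    have e4 : q ^ (2 * ((i + 1 : ℕ) : ℝ) * (((i + 1 : ℕ) : ℝ) + ν)) =
        q ^ (2 * (i : ℝ) * ((i : ℝ) + ν)) * ((q ^ 2) ^ (ν + 1 + i) * (q ^ 2) ^ i) := by
      rw [← Real.rpow_natCast (q ^ 2) i, ← Real.rpow_add hQ0, ← Real.rpow_natCast q 2,
        ← Real.rpow_mul hq0.le, ← Real.rpow_add hq0]
      congr 1; push_cast; ring
    rw [e1, e2, e3, e4, qM_rec hQ0 hQ1 hc ha, qGamma_rec hQ0 hQ1 ha, neg_add (ν + 1 + (i : ℝ)) 1,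
      Real.rpow_add hQ0 (-(ν + 1 + (i : ℝ))) (-1), Real.rpow_neg_one, Real.rpow_neg hQ0.le]
    have g := qGamma_pos hQ0 hQ1 ha
    have p1 : 0 < (q ^ 2) ^ (ν + 1 + (i : ℝ)) := by positivity
    have p2 : 0 < 1 - (q ^ 2) ^ (ν + 1 + (i : ℝ)) := by linarith [rpow_lt_one' hQ0 hQ1 ha]
    have p3 : 0 < 1 - q ^ 2 := by linarith
    generalize (q ^ 2) ^ (ν + 1 + (i : ℝ)) = X at *
    field_simp
    ring

/-- second Hankel kernel times the weight -/
def K2 (q μ ν r s : ℝ) : ℝ :=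
  qBessel2 q ν (q * ((1 + q) / μ) * (r * s)) / (r * s) ^ ν * s ^ (2 * ν + 1)

def K1 (q μ ν t r : ℝ) : ℝ :=
  qBessel1 q ν ((1 + q) / μ * (r * t)) / (r * t) ^ ν * r ^ (2 * ν + 1)

/-- the constant of the second transform of the Gaussian -/
def cG (q μ ν γ α : ℝ) : ℝ :=
  q ^ (ν ^ 2) * (q / μ) ^ ν * (μ / α) ^ (ν + 1) / γ *
    ((q ^ 2) ^ (-(ν + 1)) * qM (q ^ 2) (α * γ ^ 2 / μ) (ν + 1) / qGamma (q ^ 2) (ν + 1))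

lemma base2 {q : ℝ} (hq0 : 0 < q) (hq1 : q < 1) {μ ν γ α r : ℝ} (hμ : 0 < μ) (hν : -1 < ν)
    (hγ : 0 < γ) (hα : 0 < α) (hr : 0 < r) :
    HasSum (fun k : ℤ => K2 q μ ν r (q ^ k * γ) * qExpe (q ^ 2) (α * q ^ 2 * (q ^ k * γ) ^ 2 / μ)
      * q ^ k) (cG q μ ν γ α * qExpE (q ^ 2) (-(r ^ 2 / (μ * α)))) := by
  have hQ0 : 0 < q ^ 2 := by positivity
  have hQ1 : q ^ 2 < 1 := by nlinarith
  set c : ℝ := α * γ ^ 2 / μ with hc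
  have hcpos : 0 < c := by positivity
  set y : ℝ := r ^ 2 / (μ * α) with hy
  have hypos : 0 < y := by positivity
  set a : ℕ → ℝ := fun i => q ^ (2 * (i : ℝ) * ((i : ℝ) + ν)) * (-1 : ℝ) ^ i /
        (qFact (q ^ 2) i * qGamma (q ^ 2) ((i : ℝ) + ν + 1)) * (q ^ 2 * y) ^ i with ha
  set W : ℤ → ℕ → ℝ := fun k i => ((q ^ 2) ^ k * c) ^ (ν + 1 + i) *
    qExpe (q ^ 2) (q ^ 2 * ((q ^ 2) ^ k * c)) with hW
  set w : ℕ → ℝ := fun i => (q ^ 2) ^ (-(ν + 1 + i)) * qM (q ^ 2) c (ν + 1 + i) with hw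
  have hapos : ∀ i : ℕ, 0 < ν + 1 + (i : ℝ) := fun i => by
    have : (0:ℝ) ≤ i := by positivity
    linarith
  have hGpos : ∀ i : ℕ, 0 < qGamma (q ^ 2) ((i : ℝ) + ν + 1) := fun i =>
    qGamma_pos hQ0 hQ1 (by linarith [hapos i])
  set D : ℝ := (q ^ 2) ^ (-(ν + 1)) * qM (q ^ 2) c (ν + 1) / qGamma (q ^ 2) (ν + 1) with hD
  have hcoef : ∀ (i : ℕ) (z : ℝ), q ^ (2 * (i : ℝ) * ((i : ℝ) + ν)) * z ^ i /
        (qFact (q ^ 2) i * qGamma (q ^ 2) ((i : ℝ) + ν + 1)) * (q ^ 2 * y) ^ i * w i =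
        D * ((q ^ 2) ^ (i * (i - 1) / 2) * (z * y) ^ i / qFact (q ^ 2) i) := by
    intro i z
    have := coef_id hq0 hq1 hcpos hν i
    calc _ = (q ^ (2 * (i : ℝ) * ((i : ℝ) + ν)) * (q ^ 2) ^ i /
        qGamma (q ^ 2) ((i : ℝ) + ν + 1) * w i) * ((z * y) ^ i / qFact (q ^ 2) i) := by
          rw [mul_pow, mul_pow]
          have := hGpos i
          have := qFact_pos' hQ0 hQ1 i
          field_simp
      _ = _ := by rw [hw, this, hD]; ring
  have hex := exchange a W w ?_ ?_ ?_
  · have hval : ∑' i, a i * w i = D * qExpE (q ^ 2) (-y) := by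
      unfold qExpE
      rw [← tsum_mul_left]
      refine tsum_congr fun i => ?_
      have := hcoef i (-1)
      rw [neg_one_mul] at this
      exact this
    rw [hval] at hex
    have hfin := hex.mul_left (q ^ (ν ^ 2) * (q / μ) ^ ν * (μ / α) ^ (ν + 1) / γ)
    have hv2 : q ^ (ν ^ 2) * (q / μ) ^ ν * (μ / α) ^ (ν + 1) / γ * (D * qExpE (q ^ 2) (-y)) =
        cG q μ ν γ α * qExpE (q ^ 2) (-y) := by
      unfold cG; rw [hD]; ring
    rw [hv2] at hfin
    refine hfin.congr_fun ?_
    intro k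
    set s : ℝ := q ^ k * γ with hs
    have hspos : 0 < s := by positivity
    set u : ℝ := (q ^ 2) ^ k * c with hu
    have hus : u = α * s ^ 2 / μ := by
      have hqq : (q ^ 2) ^ k = (q ^ k) ^ 2 := by rw [pow_two, mul_zpow, ← pow_two]
      rw [hu, hs, hc, mul_pow, hqq]
      ring
    have hupos : 0 < u := by positivity
    unfold K2 qBessel2
    have e1 : q * ((1 + q) / μ) * (r * s) / (1 + q) = (q / μ) * (r * s) := by
      field_simp
    have e2 : ((q / μ) * (r * s)) ^ ν = (q / μ) ^ ν * (r * s) ^ ν :=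
      Real.mul_rpow (by positivity) (by positivity)
    have e3 : q ^ k = s / γ := by rw [hs]; field_simp
    have e4 : s ^ (2 * ν + 1) * s = (μ / α) ^ (ν + 1) * u ^ (ν + 1) := by
      rw [← Real.mul_rpow (by positivity) hupos.le, hus,
        show μ / α * (α * s ^ 2 / μ) = s ^ 2 by field_simp, ← Real.rpow_add_one hspos.ne',
        ← Real.rpow_natCast s 2, ← Real.rpow_mul hspos.le]
      congr 1; push_cast; ring
    have e5 : α * q ^ 2 * s ^ 2 / μ = q ^ 2 * u := by rw [hus]; ring
    have e6 : ∑' i, a i * W k i = (∑' i : ℕ, q ^ (2 * (i : ℝ) * ((i : ℝ) + ν)) * (-1 : ℝ) ^ i /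
        (qFact (q ^ 2) i * qGamma (q ^ 2) ((i : ℝ) + ν + 1)) *
        ((q / μ) * (r * s)) ^ (2 * i)) * (u ^ (ν + 1) * qExpe (q ^ 2) (q ^ 2 * u)) := by
      rw [← tsum_mul_right]
      refine tsum_congr fun i => ?_
      simp only [ha, hW]
      rw [← hu, Real.rpow_add hupos, Real.rpow_natCast, pow_mul,
        show ((q / μ) * (r * s)) ^ 2 = (q ^ 2 * y) * u by rw [hus, hy]; field_simp, mul_pow _ u]
      ring
    rw [e1, e2, e5, e6, e3]
    have hrs : (r * s) ^ ν ≠ 0 := (Real.rpow_pos_of_pos (by positivity) _).ne'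
    generalize (∑' i : ℕ, q ^ (2 * (i : ℝ) * ((i : ℝ) + ν)) * (-1 : ℝ) ^ i /
        (qFact (q ^ 2) i * qGamma (q ^ 2) ((i : ℝ) + ν + 1)) *
        ((q / μ) * (r * s)) ^ (2 * i)) = Z
    generalize qExpe (q ^ 2) (q ^ 2 * u) = Y
    rw [show q ^ (ν ^ 2) * ((q / μ) ^ ν * (r * s) ^ ν) * Z / (r * s) ^ ν
      = q ^ (ν ^ 2) * (q / μ) ^ ν * Z by field_simp]
    calc q ^ ν ^ 2 * (q / μ) ^ ν * Z * s ^ (2 * ν + 1) * Y * (s / γ)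
       = q ^ ν ^ 2 * (q / μ) ^ ν * Z * (s ^ (2 * ν + 1) * s) * Y / γ := by ring
      _ = _ := by rw [e4]; ring
  · intro k i
    exact mul_nonneg (by positivity) (qExpe_pos hQ0 hQ1 _ (by positivity)).le
  · intro i
    exact hasSum_shift hQ0 hQ1 hcpos (hapos i)
  · refine ((summable_E hQ0 hQ1 (1 * y)).mul_left D).congr fun i => ?_
    rw [← hcoef i 1]
    congr 1
    rw [ha]
    simp only
    have := hGpos i
    have := qFact_pos' hQ0 hQ1 i
    rw [abs_mul, abs_div, abs_mul, abs_pow, abs_neg, abs_one, abs_of_pos (by positivity : 0 <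
      q ^ (2 * (i : ℝ) * ((i : ℝ) + ν))), abs_of_pos (by positivity : 0 <
      (qFact (q ^ 2) i * qGamma (q ^ 2) ((i : ℝ) + ν + 1))), abs_of_pos (by positivity : 0 <
      (q ^ 2 * y) ^ i)]

/-- `d` -/
def dC (q μ ν γ α : ℝ) : ℝ := q ^ (ν * (ν + 1)) / qGamma (q ^ 2) (ν + 1) *
          jacksonInf (q ^ 2) (α * γ ^ 2 / μ) (fun u => u ^ ν * qExpe (q ^ 2) u)

lemma dC_eq {q : ℝ} (hq0 : 0 < q) {μ ν γ α : ℝ} (hμ : 0 < μ) 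
    (hγ : 0 < γ) (hα : 0 < α) : dC q μ ν γ α = q ^ (ν * (ν + 1)) / qGamma (q ^ 2) (ν + 1) *
      ((1 - q ^ 2) * qM (q ^ 2) (α * γ ^ 2 / μ) (ν + 1)) := by
  unfold dC jacksonInf qM
  rw [mul_assoc (1 - q ^ 2), ← tsum_mul_left]
  refine congrArg (fun z => q ^ (ν * (ν + 1)) / qGamma (q ^ 2) (ν + 1) * ((1 - q ^ 2) * z))
    (tsum_congr fun k => ?_)
  rw [Real.rpow_add_one (by positivity)]
  ring

lemma base1 {q : ℝ} (hq0 : 0 < q) (hq1 : q < 1) {μ ν α t : ℝ} (hμ : 0 < μ) (hν : -1 < ν)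
    (hα : 0 < α) (ht : 0 < t) (ht2 : t ^ 2 < μ / (α * (1 - q ^ 2))) (R : ℝ) (hR : 0 < R)
    (hR2 : R ^ 2 = μ * α / (1 - q ^ 2)) :
    HasSum (fun k : ℕ => K1 q μ ν t (q ^ k * R) * hk (q ^ 2) k * q ^ k)
      ((1 / μ) ^ ν * (R ^ 2) ^ (ν + 1) / R * ((q ^ 2) ^ (ν + 1) * (1 - q ^ 2) ^ ν) *
        qExpe (q ^ 2) (α * q ^ 2 * t ^ 2 / μ)) := by
  have hQ0 : 0 < q ^ 2 := by positivity
  have hQ1 : q ^ 2 < 1 := by nlinarith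
  have h1Q : 0 < 1 - q ^ 2 := by linarith
  set x : ℝ := α * t ^ 2 / μ with hx
  have hxpos : 0 < x := by positivity
  have hxlt : x < 1 / (1 - q ^ 2) := by
    rw [lt_div_iff₀ (by positivity)] at ht2
    rw [hx, lt_div_iff₀ h1Q, div_mul_eq_mul_div, div_lt_one hμ]
    linarith
  have hqx : q ^ 2 * x < 1 / (1 - q ^ 2) := by nlinarith
  set a : ℕ → ℝ := fun j => (-1 : ℝ) ^ j /
        (qFact (q ^ 2) j * qGamma (q ^ 2) ((j : ℝ) + ν + 1)) * (x / (1 - q ^ 2)) ^ j with ha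
  set W : ℕ → ℕ → ℝ := fun k j => ((q ^ 2) ^ (ν + 1 + (j : ℝ))) ^ k * hk (q ^ 2) k with hW
  set w : ℕ → ℝ := fun j => (q ^ 2) ^ (ν + 1 + (j : ℝ)) * (1 - q ^ 2) ^ (ν + 1 + (j : ℝ) - 1) *
    qGamma (q ^ 2) (ν + 1 + (j : ℝ)) with hw
  have hapos : ∀ i : ℕ, 0 < ν + 1 + (i : ℝ) := fun i => by
    have : (0:ℝ) ≤ i := by positivity
    linarith
  have hGpos : ∀ i : ℕ, 0 < qGamma (q ^ 2) (ν + 1 + (i : ℝ)) := fun i =>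
    qGamma_pos hQ0 hQ1 (hapos i)
  set D : ℝ := (q ^ 2) ^ (ν + 1) * (1 - q ^ 2) ^ ν with hD
  have e3 : ∀ i : ℕ, (i : ℝ) + ν + 1 = ν + 1 + i := fun i => by ring
  have hcoef : ∀ (i : ℕ) z, z ^ i /
        (qFact (q ^ 2) i * qGamma (q ^ 2) ((i : ℝ) + ν + 1)) * (x / (1 - q ^ 2)) ^ i * w i =
        D * ((z * (q ^ 2 * x)) ^ i / qFact (q ^ 2) i) := by
    intro i z
    rw [e3, hw, hD]
    simp only
    rw [show ν + 1 + (i : ℝ) - 1 = ν + i by ring, Real.rpow_add hQ0, Real.rpow_add h1Q,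
      Real.rpow_natCast, Real.rpow_natCast, div_pow, mul_pow, mul_pow]
    have := hGpos i
    have := qFact_pos' hQ0 hQ1 i
    field_simp
  have hex := exchange a W w ?_ ?_ ?_
  · have hval : ∑' i, a i * w i = D * qExpe (q ^ 2) (q ^ 2 * x) := by
      rw [← e_eq_inv hQ0 hQ1 _ (by positivity) hqx, ← tsum_mul_left]
      refine tsum_congr fun i => ?_
      have := hcoef i (-1)
      rw [neg_one_mul] at this
      exact this
    rw [hval] at hex
    have hfin := hex.mul_left ((1 / μ) ^ ν * (R ^ 2) ^ (ν + 1) / R)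
    have hv2 : (1 / μ) ^ ν * (R ^ 2) ^ (ν + 1) / R * (D * qExpe (q ^ 2) (q ^ 2 * x)) =
        (1 / μ) ^ ν * (R ^ 2) ^ (ν + 1) / R * D *
        qExpe (q ^ 2) (α * q ^ 2 * t ^ 2 / μ) := by
      rw [show α * q ^ 2 * t ^ 2 / μ = q ^ 2 * x by rw [hx]; ring]; ring
    rw [hv2] at hfin
    refine hfin.congr_fun ?_
    intro k
    set r : ℝ := q ^ k * R with hr
    have hrpos : 0 < r := by positivity
    unfold K1 qBessel1
    have e1 : (1 + q) / μ * (r * t) / (1 + q) = (1 / μ) * (r * t) := by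
      field_simp
    have e2 : ((1 / μ) * (r * t)) ^ ν = (1 / μ) ^ ν * (r * t) ^ ν :=
      Real.mul_rpow (by positivity) (by positivity)
    have e0 : q ^ k = r / R := by rw [hr]; field_simp
    have hr2 : r ^ 2 = (q ^ 2) ^ k * R ^ 2 := by rw [hr]; ring
    have e4 : r ^ (2 * ν + 1) * r = (R ^ 2) ^ (ν + 1) * ((q ^ 2) ^ (ν + 1)) ^ k := by
      rw [← Real.rpow_natCast _ k, ← Real.rpow_mul hQ0.le, mul_comm (ν + 1), Real.rpow_mul hQ0.le,
        ← Real.mul_rpow (by positivity) (by positivity), Real.rpow_natCast, mul_comm (R ^ 2), ← hr2,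
        ← Real.rpow_add_one hrpos.ne',
        ← Real.rpow_natCast r 2, ← Real.rpow_mul hrpos.le]
      congr 1; push_cast; ring
    have e6 : ∑' i, a i * W k i = (∑' i : ℕ, (-1 : ℝ) ^ i /
        (qFact (q ^ 2) i * qGamma (q ^ 2) ((i : ℝ) + ν + 1)) *
        ((1 / μ) * (r * t)) ^ (2 * i)) * (((q ^ 2) ^ (ν + 1)) ^ k * hk (q ^ 2) k) := by
      rw [← tsum_mul_right]
      refine tsum_congr fun i => ?_
      simp only [ha, hW]
      have e7 : ((1 / μ) * (r * t)) ^ 2 = (q ^ 2) ^ k * (x / (1 - q ^ 2)) := by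
        rw [mul_pow, mul_pow, hr2, hR2, hx]; field_simp
      rw [Real.rpow_add hQ0, Real.rpow_natCast, pow_mul, e7, mul_pow, mul_pow, ← pow_mul,
        ← pow_mul, ← pow_mul, mul_comm i k]
      ring
    rw [e1, e2, e6]
    have hrs : (r * t) ^ ν ≠ 0 := (Real.rpow_pos_of_pos (by positivity) _).ne'
    generalize (∑' i : ℕ, (-1 : ℝ) ^ i /
        (qFact (q ^ 2) i * qGamma (q ^ 2) ((i : ℝ) + ν + 1)) *
        ((1 / μ) * (r * t)) ^ (2 * i)) = Z
    generalize hk (q ^ 2) k = Y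
    rw [show ((1 / μ) ^ ν * (r * t) ^ ν) * Z / (r * t) ^ ν
      = (1 / μ) ^ ν * Z by field_simp]
    calc (1 / μ) ^ ν * Z * r ^ (2 * ν + 1) * Y * q ^ k
       = (1 / μ) ^ ν * Z * (r ^ (2 * ν + 1) * r) * Y / R := by rw [e0]; ring
      _ = _ := by rw [e4]; ring
  · intro k i
    exact mul_nonneg (by positivity) (hk_nonneg hQ0 hQ1 _)
  · intro i
    exact hasSum_S hQ0 hQ1 (hapos i)
  · have habs : |1 * (q ^ 2 * x)| < 1 / (1 - q ^ 2) := by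
      rw [one_mul, abs_of_pos (by positivity)]; exact hqx
    refine ((summable_e hQ0 hQ1 _ habs).mul_left D).congr fun i => ?_
    rw [← hcoef i 1]
    congr 1
    rw [ha]
    simp only
    have h1 := hGpos i
    rw [← e3] at h1
    have := qFact_pos' hQ0 hQ1 i
    rw [abs_mul, abs_div, abs_pow, abs_neg, abs_one, abs_of_pos (by positivity : 0 <
      (qFact (q ^ 2) i * qGamma (q ^ 2) ((i : ℝ) + ν + 1))), abs_of_pos (by positivity : 0 <
      (x / (1 - q ^ 2)) ^ i)]

/-- the upper limit of the first transform -/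
def Rr (q μ α : ℝ) : ℝ := Real.sqrt (μ / ((1 - q ^ 2) * (1 / α)))

def GoodF (q μ ν γ α : ℝ) (f : ℝ → ℝ) : Prop :=
  (∀ r : ℝ, 0 < r → Summable (fun k : ℤ => K2 q μ ν r (q ^ k * γ) * f (q ^ k * γ) * q ^ k)) ∧
  (∀ j : ℕ, hankel2 q μ ν γ f ((q ^ j)⁻¹ * Rr q μ α) = 0) ∧
  ∀ t : ℝ, 0 < t → t < Real.sqrt (μ / (α * (1 - q ^ 2))) →
    Summable (fun k : ℕ => K1 q μ ν t (q ^ k * Rr q μ α) *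
      hankel2 q μ ν γ f (q ^ k * Rr q μ α) * q ^ k) ∧
    hankel1 q μ ν (1 / α) (hankel2 q μ ν γ f) t = dC q μ ν γ α * f t

lemma hankel2_eq (q μ ν γ : ℝ) (f : ℝ → ℝ) (r : ℝ) : hankel2 q μ ν γ f r =
    (1 + q) / μ * ((1 - q) * γ * ∑' k : ℤ, K2 q μ ν r (q ^ k * γ) * f (q ^ k * γ) * q ^ k) := rfl

lemma hankel1_eq (q μ ν α : ℝ) (f : ℝ → ℝ) (t : ℝ) : hankel1 q μ ν (1 / α) f t =
    (1 + q) / μ * ((1 - q) * Rr q μ α *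
      ∑' k : ℕ, K1 q μ ν t (q ^ k * Rr q μ α) * f (q ^ k * Rr q μ α) * q ^ k) := rfl

lemma Rr_pos {q μ α : ℝ} (hq0 : 0 < q) (hq1 : q < 1) (hμ : 0 < μ) (hα : 0 < α) :
    0 < Rr q μ α := by
  have : 0 < 1 - q ^ 2 := by nlinarith
  exact Real.sqrt_pos.2 (by positivity)

lemma Rr_sq {q μ α : ℝ} (hq0 : 0 < q) (hq1 : q < 1) (hμ : 0 < μ) (hα : 0 < α) :
    Rr q μ α ^ 2 = μ * α / (1 - q ^ 2) := by
  have : 0 < 1 - q ^ 2 := by nlinarith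
  unfold Rr
  rw [Real.sq_sqrt (by positivity)]
  field_simp

lemma Rr_shift {q μ α : ℝ} (hq0 : 0 < q) (hq1 : q < 1) (hμ : 0 < μ) (hα : 0 < α) :
    Rr q μ (q ^ 2 * α) = q * Rr q μ α := by
  have h1 := Rr_pos hq0 hq1 hμ hα
  have h2 := Rr_pos hq0 hq1 hμ (show 0 < q ^ 2 * α by positivity)
  have h3 : Rr q μ (q ^ 2 * α) ^ 2 = (q * Rr q μ α) ^ 2 := by
    rw [mul_pow, Rr_sq hq0 hq1 hμ hα, Rr_sq hq0 hq1 hμ (by positivity)]; ring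
  exact (pow_left_inj₀ h2.le (by positivity) two_ne_zero).1 h3

lemma GoodF.comb {q μ ν γ α : ℝ} (hq0 : 0 < q) (hq1 : q < 1) (hμ : 0 < μ) (hα : 0 < α)
    {f g : ℝ → ℝ} (hf : GoodF q μ ν γ α f) (hg : GoodF q μ ν γ α g) (a b : ℝ) :
    GoodF q μ ν γ α (fun s => a * f s + b * g s) := by
  obtain ⟨f1, f2, f3⟩ := hf
  obtain ⟨g1, g2, g3⟩ := hg
  have hR := Rr_pos hq0 hq1 hμ hα
  have hh : ∀ r, 0 < r → hankel2 q μ ν γ (fun s => a * f s + b * g s) r =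
      a * hankel2 q μ ν γ f r + b * hankel2 q μ ν γ g r := by
    intro r hr
    have e : ∑' k : ℤ, K2 q μ ν r (q ^ k * γ) * (a * f (q ^ k * γ) + b * g (q ^ k * γ)) * q ^ k =
        a * ∑' k : ℤ, K2 q μ ν r (q ^ k * γ) * f (q ^ k * γ) * q ^ k +
        b * ∑' k : ℤ, K2 q μ ν r (q ^ k * γ) * g (q ^ k * γ) * q ^ k := by
      rw [← tsum_mul_left, ← tsum_mul_left,
        ← ((f1 r hr).mul_left a).tsum_add ((g1 r hr).mul_left b)]
      exact tsum_congr fun k => by ring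
    rw [hankel2_eq, hankel2_eq, hankel2_eq, e]
    ring
  refine ⟨fun r hr => ?_, fun j => ?_, fun t ht0 ht1 => ?_⟩
  · refine (((f1 r hr).mul_left a).add ((g1 r hr).mul_left b)).congr fun k => ?_
    ring
  · rw [hh _ (by positivity), f2, g2]; ring
  · obtain ⟨f4, f5⟩ := f3 t ht0 ht1
    obtain ⟨g4, g5⟩ := g3 t ht0 ht1
    have hs := (f4.mul_left a).add (g4.mul_left b)
    have hc : ∀ k : ℕ, a * (K1 q μ ν t (q ^ k * Rr q μ α) *
          hankel2 q μ ν γ f (q ^ k * Rr q μ α) * q ^ k) + b * (K1 q μ ν t (q ^ k * Rr q μ α) *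
          hankel2 q μ ν γ g (q ^ k * Rr q μ α) * q ^ k) = K1 q μ ν t (q ^ k * Rr q μ α) *
          hankel2 q μ ν γ (fun s => a * f s + b * g s) (q ^ k * Rr q μ α) * q ^ k := by
      intro k
      rw [hh _ (by positivity)]; ring
    refine ⟨hs.congr hc, ?_⟩
    rw [hankel1_eq] at f5 g5 ⊢
    rw [← tsum_congr hc, (f4.mul_left a).tsum_add (g4.mul_left b), tsum_mul_left, tsum_mul_left]
    linear_combination a * f5 + b * g5

lemma dC_shift {q μ ν γ α : ℝ} (hq0 : 0 < q) (hμ : 0 < μ) (hγ : 0 < γ) (hα : 0 < α) :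
    dC q μ ν γ (q ^ 2 * α) = dC q μ ν γ α := by
  rw [dC_eq hq0 hμ hγ hα, dC_eq hq0 hμ hγ (by positivity)]
  have : qM (q ^ 2) (q ^ 2 * α * γ ^ 2 / μ) (ν + 1) = qM (q ^ 2) (α * γ ^ 2 / μ) (ν + 1) := by
    unfold qM
    rw [← (Equiv.addRight (1 : ℤ)).tsum_eq
      (fun k : ℤ => ((q ^ 2) ^ k * (α * γ ^ 2 / μ)) ^ (ν + 1) *
        qExpe (q ^ 2) ((q ^ 2) ^ k * (α * γ ^ 2 / μ)))]
    refine tsum_congr fun k => ?_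
    simp only [Equiv.coe_addRight]
    rw [zpow_add_one₀ (by positivity)]
    rw [show (q ^ 2) ^ k * q ^ 2 * (α * γ ^ 2 / μ) = (q ^ 2) ^ k * (q ^ 2 * α * γ ^ 2 / μ) by ring]
  rw [this]

lemma GoodF.shift {q μ ν γ α : ℝ} (hq0 : 0 < q) (hq1 : q < 1) (hμ : 0 < μ) (hγ : 0 < γ)
    (hα : 0 < α) {f : ℝ → ℝ} (hf : GoodF q μ ν γ (q ^ 2 * α) f) : GoodF q μ ν γ α f := by
  obtain ⟨f1, f2, f3⟩ := hf
  have hR := Rr_pos hq0 hq1 hμ hα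
  rw [Rr_shift hq0 hq1 hμ hα] at f2 f3
  have h1q : 0 < 1 - q ^ 2 := by nlinarith
  have z : ∀ j : ℕ, hankel2 q μ ν γ f ((q ^ j)⁻¹ * Rr q μ α) = 0 := by
    intro j
    have := f2 (j + 1)
    rwa [show (q ^ (j + 1))⁻¹ * (q * Rr q μ α) = (q ^ j)⁻¹ * Rr q μ α by
      rw [pow_succ]; field_simp] at this
  refine ⟨f1, z, fun t ht0 ht1 => ?_⟩
  have ht2 : t < Real.sqrt (μ / (q ^ 2 * α * (1 - q ^ 2))) := by
    refine ht1.trans_le (Real.sqrt_le_sqrt ?_)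
    have : q ^ 2 * (α * (1 - q ^ 2)) ≤ α * (1 - q ^ 2) :=
      mul_le_of_le_one_left (by positivity) (by nlinarith)
    rw [mul_assoc]
    gcongr
  obtain ⟨f4, f5⟩ := f3 t ht0 ht2
  have hterm : ∀ k : ℕ, q * (K1 q μ ν t (q ^ k * (q * Rr q μ α)) *
      hankel2 q μ ν γ f (q ^ k * (q * Rr q μ α)) * q ^ k) =
      K1 q μ ν t (q ^ (k + 1) * Rr q μ α) *
      hankel2 q μ ν γ f (q ^ (k + 1) * Rr q μ α) * q ^ (k + 1) := by
    intro k
    rw [show q ^ k * (q * Rr q μ α) = q ^ (k + 1) * Rr q μ α by ring]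
    ring
  have hs : Summable (fun k : ℕ => K1 q μ ν t (q ^ k * Rr q μ α) *
      hankel2 q μ ν γ f (q ^ k * Rr q μ α) * q ^ k) :=
    (summable_nat_add_iff 1).1 ((f4.mul_left q).congr hterm)
  refine ⟨hs, ?_⟩
  rw [← dC_shift hq0 hμ hγ hα, ← f5, hankel1_eq, hankel1_eq, Rr_shift hq0 hq1 hμ hα,
    hs.tsum_eq_zero_add, ← tsum_congr hterm, tsum_mul_left]
  have z0 := z 0
  simp only [pow_zero, inv_one, one_mul] at z0
  simp only [pow_zero, one_mul, z0]
  ring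

lemma E_zero {Q : ℝ} (hQ0 : 0 < Q) (hQ1 : Q < 1) (j : ℕ) :
    qExpE Q (-((Q ^ j)⁻¹ / (1 - Q))) = 0 := by
  have h1 : 0 < 1 - Q := by linarith
  induction j with
  | zero =>
    rw [qExpE_feq hQ0 hQ1]
    have : 1 + (1 - Q) * -((Q ^ 0)⁻¹ / (1 - Q)) = 0 := by field_simp; simp
    rw [this, zero_mul]
  | succ j ih =>
    rw [qExpE_feq hQ0 hQ1,
      show Q * -((Q ^ (j + 1))⁻¹ / (1 - Q)) = -((Q ^ j)⁻¹ / (1 - Q)) by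
        rw [pow_succ]; field_simp, ih, mul_zero]

lemma const_id {q : ℝ} (hq0 : 0 < q) (hq1 : q < 1) {μ ν γ α : ℝ} (hμ : 0 < μ)
    (hγ : 0 < γ) (hα : 0 < α) (R : ℝ) (hR : 0 < R) (hR2 : R ^ 2 = μ * α / (1 - q ^ 2)) :
    (1 + q) / μ * ((1 - q) * R * ((1 + q) / μ * ((1 - q) * γ * cG q μ ν γ α) *
      ((1 / μ) ^ ν * (R ^ 2) ^ (ν + 1) / R * ((q ^ 2) ^ (ν + 1) * (1 - q ^ 2) ^ ν)))) =
    dC q μ ν γ α := by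
  have h1 : 0 < 1 - q ^ 2 := by nlinarith
  rw [dC_eq hq0 hμ hγ hα, hR2]
  unfold cG
  rw [Real.rpow_neg (by positivity), Real.div_rpow (by positivity) h1.le,
    Real.mul_rpow hμ.le hα.le, Real.div_rpow hμ.le hα.le, Real.div_rpow hq0.le hμ.le,
    Real.div_rpow zero_le_one hμ.le, Real.one_rpow, Real.rpow_add_one h1.ne',
    Real.rpow_add_one hμ.ne', Real.rpow_add_one hα.ne',
    show ν * (ν + 1) = ν ^ 2 + ν by ring, Real.rpow_add hq0]
  have p1 : 0 < (q ^ 2) ^ (ν + 1) := by positivity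
  have p2 : 0 < (1 - q ^ 2) ^ ν := by positivity
  have p3 : 0 < μ ^ ν := by positivity
  have p4 : 0 < α ^ ν := by positivity
  generalize (q ^ 2) ^ (ν + 1) = X1 at *
  generalize qM (q ^ 2) (α * γ ^ 2 / μ) (ν + 1) = X5
  generalize qGamma (q ^ 2) (ν + 1) = X6
  generalize q ^ ν = X7
  generalize q ^ ν ^ 2 = X8
  generalize (1 - q ^ 2) ^ ν = X2 at *
  generalize μ ^ ν = X3 at *
  generalize α ^ ν = X4 at *
  have h1' := h1.ne'
  rw [div_eq_mul_inv (X1⁻¹ * X5) X6, div_eq_mul_inv (X8 * X7) X6]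
  generalize X6⁻¹ = X9
  field_simp
  ring

lemma GoodF.base {q : ℝ} (hq0 : 0 < q) (hq1 : q < 1) {μ ν γ α : ℝ} (hμ : 0 < μ) (hν : -1 < ν)
    (hγ : 0 < γ) (hα : 0 < α) :
    GoodF q μ ν γ α (fun s => qExpe (q ^ 2) (α * q ^ 2 * s ^ 2 / μ)) := by
  have hQ0 : 0 < q ^ 2 := by positivity
  have hQ1 : q ^ 2 < 1 := by nlinarith
  have h1 : 0 < 1 - q ^ 2 := by linarith
  have hR := Rr_pos hq0 hq1 hμ hα
  have hR2 := Rr_sq hq0 hq1 hμ hα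
  have hv : ∀ r, 0 < r → hankel2 q μ ν γ (fun s => qExpe (q ^ 2) (α * q ^ 2 * s ^ 2 / μ)) r =
      (1 + q) / μ * ((1 - q) * γ * cG q μ ν γ α) * qExpE (q ^ 2) (-(r ^ 2 / (μ * α))) := by
    intro r hr
    rw [hankel2_eq, (base2 hq0 hq1 hμ hν hγ hα hr).tsum_eq]
    ring
  refine ⟨fun r hr => (base2 hq0 hq1 hμ hν hγ hα hr).summable, fun j => ?_, fun t ht0 ht1 => ?_⟩
  · rw [hv _ (by positivity), mul_pow, hR2]
    rw [show ((q ^ j)⁻¹) ^ 2 * (μ * α / (1 - q ^ 2)) / (μ * α) = ((q ^ 2) ^ j)⁻¹ / (1 - q ^ 2) by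
      rw [← pow_mul, mul_comm 2 j, pow_mul]; field_simp, E_zero hQ0 hQ1, mul_zero]
  · have ht2 : t ^ 2 < μ / (α * (1 - q ^ 2)) := (Real.lt_sqrt ht0.le).1 ht1
    have hb := (base1 hq0 hq1 hμ hν hα ht0 ht2 _ hR hR2).mul_left
      ((1 + q) / μ * ((1 - q) * γ * cG q μ ν γ α))
    have hc : ∀ k : ℕ, (1 + q) / μ * ((1 - q) * γ * cG q μ ν γ α) *
        (K1 q μ ν t (q ^ k * Rr q μ α) * hk (q ^ 2) k * q ^ k) =
        K1 q μ ν t (q ^ k * Rr q μ α) * hankel2 q μ ν γ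
          (fun s => qExpe (q ^ 2) (α * q ^ 2 * s ^ 2 / μ)) (q ^ k * Rr q μ α) * q ^ k := by
      intro k
      rw [hv _ (by positivity), mul_pow, hR2]
      unfold hk
      rw [show -((q ^ k) ^ 2 * (μ * α / (1 - q ^ 2)) / (μ * α)) =
        (q ^ 2) ^ k * -(1 / (1 - q ^ 2)) by
        rw [← pow_mul, ← pow_mul, mul_comm 2 k]; field_simp]
      ring
    refine ⟨hb.summable.congr hc, ?_⟩
    rw [hankel1_eq, ← tsum_congr hc, hb.tsum_eq, ← const_id (ν := ν) hq0 hq1 hμ hγ hα _ hR hR2]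
    ring

lemma GoodF.poly {q : ℝ} (hq0 : 0 < q) (hq1 : q < 1) {μ ν γ : ℝ} (hμ : 0 < μ) (hν : -1 < ν)
    (hγ : 0 < γ) (n : ℕ) : ∀ (α : ℝ), 0 < α → ∀ p : Polynomial ℝ, p.natDegree ≤ n →
    GoodF q μ ν γ α (fun s => p.eval (s ^ 2) * qExpe (q ^ 2) (α * q ^ 2 * s ^ 2 / μ)) := by
  have hQ0 : 0 < q ^ 2 := by positivity
  have hQ1 : q ^ 2 < 1 := by nlinarith
  have h1 : 0 < 1 - q ^ 2 := by linarith
  induction n with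
  | zero =>
    intro α hα p hp
    have hb := GoodF.base hq0 hq1 hμ hν hγ hα
    have := hb.comb hq0 hq1 hμ hα hb (p.coeff 0) 0
    rw [Polynomial.eq_C_of_natDegree_le_zero hp]
    simpa using this
  | succ n ih =>
    intro α hα p hp
    set B : ℝ := (1 - q ^ 2) * q ^ 2 * α / μ with hB
    have hBpos : 0 < B := by positivity
    set a : ℝ := -(1 / B) with ha
    set p' := p /ₘ (Polynomial.X - Polynomial.C a) with hp'
    have hdeg : p'.natDegree ≤ n := by
      rw [hp', Polynomial.natDegree_divByMonic _ (Polynomial.monic_X_sub_C a),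
        Polynomial.natDegree_X_sub_C]
      omega
    have hb := GoodF.base hq0 hq1 hμ hν hγ hα
    have hi := GoodF.shift hq0 hq1 hμ hγ hα (ih (q ^ 2 * α) (by positivity) p' hdeg)
    have hc := hb.comb hq0 hq1 hμ hα hi (p.eval a) (1 / B)
    convert hc using 2 with s
    have hdecomp := congrArg (Polynomial.eval (s ^ 2))
      (Polynomial.modByMonic_add_div p (Polynomial.X - Polynomial.C a))
    rw [Polynomial.modByMonic_X_sub_C_eq_C_eval, ← hp'] at hdecomp
    simp only [Polynomial.eval_add, Polynomial.eval_mul, Polynomial.eval_sub, Polynomial.eval_X,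
      Polynomial.eval_C] at hdecomp
    have hfe := qExpe_feq hQ0 hQ1 (α * q ^ 2 * s ^ 2 / μ) (by positivity)
    rw [show q ^ 2 * α * q ^ 2 * s ^ 2 / μ = q ^ 2 * (α * q ^ 2 * s ^ 2 / μ) by ring, hfe,
      ← hdecomp, show (1 - q ^ 2) * (α * q ^ 2 * s ^ 2 / μ) = B * s ^ 2 by rw [hB]; ring, ha]
    field_simp
    ring

end Helpers

/-- inversion of the q-Hankel transforms. With `μ = 1 + q^{2-m}`, `ν ≥ -1/2`,
`α, γ > 0`, `f(s) = p(s²) e_{q²}(-αq²s²/μ)` and `g = 𝓗^{q,γ}_ν[f]` (whose defining bilateral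
series converges absolutely), for `0 < t < √(μ/(α(1-q²)))` one has
`𝓗̄^{q,1/α}_ν[g](t) = d · f(t)` with
`d = (q^{ν(ν+1)}/Γ_{q²}(ν+1)) ∫_0^{(αγ²/μ)·∞} d_{q²}u u^ν e_{q²}(-u)`. -/
theorem hankel_inversion (q : ℝ) (hq0 : 0 < q) (hq1 : q < 1)
    (m : ℕ) (hm : 1 ≤ m) (ν : ℝ) (hν : -(1 / 2) ≤ ν)
    (α γ : ℝ) (hα : 0 < α) (hγ : 0 < γ) (p : Polynomial ℝ) :
    let μ : ℝ := 1 + q ^ ((2 : ℝ) - (m : ℝ))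
    let f : ℝ → ℝ := fun s => p.eval (s ^ 2) * qExpe (q ^ 2) (α * q ^ 2 * s ^ 2 / μ)
    let g : ℝ → ℝ := fun r => hankel2 q μ ν γ f r
    (∀ r : ℝ, 0 < r → Summable (fun k : ℤ =>
      qBessel2 q ν (q * ((1 + q) / μ) * (r * (q ^ k * γ))) / (r * (q ^ k * γ)) ^ ν *
        (q ^ k * γ) ^ (2 * ν + 1) * f (q ^ k * γ) * q ^ k)) ∧
    ∀ t : ℝ, 0 < t → t < Real.sqrt (μ / (α * (1 - q ^ 2))) →
      hankel1 q μ ν (1 / α) g t =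
        (q ^ (ν * (ν + 1)) / qGamma (q ^ 2) (ν + 1) *
          jacksonInf (q ^ 2) (α * γ ^ 2 / μ) (fun u => u ^ ν * qExpe (q ^ 2) u)) * f t := by
  intro μ f g
  have hμ : 0 < μ := by
    have : 0 < q ^ ((2 : ℝ) - (m : ℝ)) := Real.rpow_pos_of_pos hq0 _
    show 0 < 1 + q ^ ((2 : ℝ) - (m : ℝ))
    linarith
  obtain ⟨h1, _, h3⟩ := GoodF.poly (ν := ν) hq0 hq1 hμ (by linarith) hγ p.natDegree α hα p le_rfl
  exact ⟨h1, fun t ht0 ht1 => (h3 t ht0 ht1).2⟩
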